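/- Let R be a TRS over sign(R), and let Σ = {f, ♯} ∪ sign(R), where f is a binary symbol not in sign(R) and ♯ is a constant not in sign(R). Then R preserves Σ-recognizability of finite tree languages (i.e., R*_Σ(L) is recognizable for every finite L ⊆ T_Σ) if and only if R preserves recognizability of finite tree languages (i.e., for every ranked alphabet Γ with sign(R) ⊆ Γ and every finite L ⊆ T_Γ, R*_Γ(L) is recognizable). -/

import Mathlib

set_option autoImplicit false

/-!
Basic framework: ranked alphabets, terms, term rewrite systems,
bottom-up tree automata, recognizability.
A ranked alphabet is modelled by a (finite) type `σ` together with an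
arity function `ar : σ → ℕ`.  `Tm.var n` denotes the variable `x_{n+1}`,
so `T_Σ(X_m)` corresponds to terms all of whose variables satisfy `n < m`,
and ground terms (`T_Σ`) are terms satisfying `Tm.Ground`.
-/

/-- Terms over the ranked alphabet `(σ, ar)` with variables `x₁, x₂, …`
(`var n` is `x_{n+1}`). -/
inductive Tm (σ : Type) (ar : σ → ℕ) : Type
  | var : ℕ → Tm σ ar
  | app : (f : σ) → (Fin (ar f) → Tm σ ar) → Tm σ ar

namespace Tm

variable {σ γ : Type} {ar : σ → ℕ} {arγ : γ → ℕ}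

/-- Application of a substitution `θ` (assigning a term to each variable). -/
def subst (θ : ℕ → Tm σ ar) : Tm σ ar → Tm σ ar
  | var n => θ n
  | app f ts => app f fun i => (ts i).subst θ

/-- A term is ground if it contains no variables. -/
def Ground : Tm σ ar → Prop
  | var _ => False
  | app _ ts => ∀ i, (ts i).Ground

/-- The set of (indices of) variables occurring in a term. -/
def vars : Tm σ ar → Set ℕ
  | var n => {n}
  | app _ ts => ⋃ i, (ts i).vars

/-- Number of occurrences of the variable `x_{n+1}` in a term. -/
def count (n : ℕ) : Tm σ ar → ℕ
  | var m => if m = n then 1 else 0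
  | app _ ts => ∑ i, (ts i).count n

/-- A term is linear if every variable occurs at most once in it. -/
def Linear (t : Tm σ ar) : Prop := ∀ n, t.count n ≤ 1

/-- The symbol `s` occurs in the term. -/
def symOccurs (s : σ) : Tm σ ar → Prop
  | var _ => False
  | app f ts => f = s ∨ ∃ i, (ts i).symOccurs s

/-- Height of a term (constants and variables have height 0). -/
def height : Tm σ ar → ℕ
  | var _ => 0
  | app _ ts => Finset.univ.sup fun i => (ts i).height + 1

/-- Renaming of the alphabet along an arity-preserving map. -/
def map (ι : σ → γ) (h : ∀ s, arγ (ι s) = ar s) : Tm σ ar → Tm γ arγ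
  | var n => var n
  | app f ts => app (ι f) fun i => (ts (Fin.cast (h f) i)).map ι h

/-- The subterm of `t` at a position (a list of argument indices), if defined. -/
def subAt : Tm σ ar → List ℕ → Option (Tm σ ar)
  | t, [] => some t
  | var _, _ :: _ => none
  | app f ts, i :: p => if h : i < ar f then (ts ⟨i, h⟩).subAt p else none

/-- Subterm relation. -/
inductive Subtm : Tm σ ar → Tm σ ar → Prop
  | refl (t : Tm σ ar) : Subtm t t
  | app {s : Tm σ ar} {f : σ} {ts : Fin (ar f) → Tm σ ar} (i : Fin (ar f)) :
      Subtm s (ts i) → Subtm s (Tm.app f ts)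

end Tm

section Rewriting

variable {σ γ : Type} {ar : σ → ℕ} {arγ : γ → ℕ}

/-- One-step rewriting by the rule set `R`: apply a rule under a substitution
at the root, or rewrite inside one argument. -/
inductive Step (R : Set (Tm σ ar × Tm σ ar)) : Tm σ ar → Tm σ ar → Prop
  | rule {l r : Tm σ ar} (θ : ℕ → Tm σ ar) (h : (l, r) ∈ R) :
      Step R (l.subst θ) (r.subst θ)
  | congr {f : σ} {ts : Fin (ar f) → Tm σ ar} {t' : Tm σ ar} (i : Fin (ar f)) :
      Step R (ts i) t' → Step R (Tm.app f ts) (Tm.app f (Function.update ts i t'))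

/-- Many-step rewriting: reflexive-transitive closure of `Step`. -/
def Steps (R : Set (Tm σ ar × Tm σ ar)) : Tm σ ar → Tm σ ar → Prop :=
  Relation.ReflTransGen (Step R)

/-- `R` is a term rewrite system: finitely many rules, and every variable of a
right-hand side occurs in the corresponding left-hand side. -/
def IsTRS (R : Set (Tm σ ar × Tm σ ar)) : Prop :=
  R.Finite ∧ ∀ lr ∈ R, lr.2.vars ⊆ lr.1.vars

/-- The set `R*(L)` of descendants of members of `L`. -/
def Desc (R : Set (Tm σ ar × Tm σ ar)) (L : Set (Tm σ ar)) : Set (Tm σ ar) :=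
  {p | ∃ q ∈ L, Steps R q p}

/-- `R` is terminating: there is no infinite reduction sequence. -/
def Terminating (R : Set (Tm σ ar × Tm σ ar)) : Prop :=
  ¬ ∃ f : ℕ → Tm σ ar, ∀ n, Step R (f n) (f (n + 1))

/-- `R` is confluent. -/
def Confluent (R : Set (Tm σ ar × Tm σ ar)) : Prop :=
  ∀ a b c, Steps R a b → Steps R a c → ∃ d, Steps R b d ∧ Steps R c d

/-- `u` is an `R`-normal form of `t`. -/
def NormalFormOf (R : Set (Tm σ ar × Tm σ ar)) (t u : Tm σ ar) : Prop :=
  Steps R t u ∧ ¬ ∃ v, Step R u v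

/-- The term is a variable. -/
def IsVarTm (t : Tm σ ar) : Prop := ∃ n, t = Tm.var n

/-- Every left-hand side is linear. -/
def LeftLinearTRS (R : Set (Tm σ ar × Tm σ ar)) : Prop :=
  ∀ lr ∈ R, lr.1.Linear

/-- All left- and right-hand sides are linear. -/
def LinearTRS (R : Set (Tm σ ar × Tm σ ar)) : Prop :=
  ∀ lr ∈ R, lr.1.Linear ∧ lr.2.Linear

/-- No rule has a variable as left-hand side or as right-hand side. -/
def CollapseFree (R : Set (Tm σ ar × Tm σ ar)) : Prop :=
  ∀ lr ∈ R, ¬ IsVarTm lr.1 ∧ ¬ IsVarTm lr.2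

/-- Transport of a rule set along an arity-preserving renaming of the alphabet. -/
def mapRules (ι : σ → γ) (h : ∀ s, arγ (ι s) = ar s) (R : Set (Tm σ ar × Tm σ ar)) :
    Set (Tm γ arγ × Tm γ arγ) :=
  (fun lr => (lr.1.map ι h, lr.2.map ι h)) '' R

end Rewriting

/-- A bottom-up tree automaton over `(σ, ar)` with state type `Q`:
transition rules `δ(q₁,…,qₙ) → q`, λ-rules `q → q'`, and final states. -/
structure BTA (σ : Type) (ar : σ → ℕ) (Q : Type) where
  trans : ∀ f : σ, (Fin (ar f) → Q) → Q → Prop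
  eps : Q → Q → Prop
  final : Q → Prop

namespace BTA

variable {σ : Type} {ar : σ → ℕ} {Q : Type}

/-- `t →* q`: the (ground) term `t` can be rewritten to the state `q`. -/
inductive Reach (A : BTA σ ar Q) : Tm σ ar → Q → Prop
  | app {f : σ} {ts : Fin (ar f) → Tm σ ar} {qs : Fin (ar f) → Q} {q : Q} :
      (∀ i, Reach A (ts i) (qs i)) → A.trans f qs q → Reach A (Tm.app f ts) q
  | eps {t : Tm σ ar} {q q' : Q} : Reach A t q → A.eps q q' → Reach A t q'

/-- The tree language recognized by the automaton. -/
def Lang (A : BTA σ ar Q) : Set (Tm σ ar) := {t | ∃ q, A.final q ∧ A.Reach t q}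

end BTA

/-- A tree language is recognizable if some bottom-up tree automaton with a
finite state set recognizes it. -/
def Recognizable {σ : Type} {ar : σ → ℕ} (L : Set (Tm σ ar)) : Prop :=
  ∃ (Q : Type) (_ : Finite Q) (A : BTA σ ar Q), A.Lang = L

/-- `R` (a TRS over all of `σ`, thought of as `sign(R)`) preserves
recognizability of finite tree languages: for every ranked alphabet extending
`σ` (i.e. every finite type with an arity-preserving injection from `σ`) and
every finite tree language of ground terms, the descendant set is recognizable. -/
def PRF {σ : Type} {ar : σ → ℕ} (R : Set (Tm σ ar × Tm σ ar)) : Prop :=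
  ∀ (γ : Type) (arγ : γ → ℕ), Finite γ →
    ∀ ι : σ → γ, Function.Injective ι →
      ∀ h : ∀ s, arγ (ι s) = ar s,
        ∀ L : Set (Tm γ arγ), L.Finite → (∀ t ∈ L, t.Ground) →
          Recognizable (Desc (mapRules ι h R) L)

/-- `R` preserves recognizability: as `PRF`, but for arbitrary recognizable
tree languages. -/
def PR {σ : Type} {ar : σ → ℕ} (R : Set (Tm σ ar × Tm σ ar)) : Prop :=
  ∀ (γ : Type) (arγ : γ → ℕ), Finite γ →
    ∀ ι : σ → γ, Function.Injective ι →
      ∀ h : ∀ s, arγ (ι s) = ar s,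
        ∀ L : Set (Tm γ arγ), Recognizable L →
          Recognizable (Desc (mapRules ι h R) L)

/-! ### Extending an alphabet by a fresh binary symbol `f` and a fresh
constant `♯`: the alphabet `γ ⊕ Bool`, where `Sum.inr true` is `f` (arity 2)
and `Sum.inr false` is `♯` (arity 0). -/

/-- Arity function of `Σ = {f, ♯} ∪ Γ`. -/
def arExt {γ : Type} (arγ : γ → ℕ) : γ ⊕ Bool → ℕ :=
  Sum.elim arγ fun b => cond b 2 0

/-! Code a term over `Γ` by a term over `Σ = {f, ♯} ∪ sign(R)`: a symbol `g` outside `sign(R)`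
becomes a right comb `f(t₁, f(t₂, … f(tₙ, ♯)))` whose length identifies `g`. This coding is a tree
homomorphism, and inverse tree homomorphisms preserve recognizability, so all that is needed is
that reductions between codes reflect to reductions over `Γ`.

The difficulty is that a rule with a variable as its left-hand side also rewrites the right
arguments of `f`. Reading off the right spines of such an argument `v`, with each leaf recording
the number of `f` passed on the way, turns `v` into a term over `sign(R)` that is reachable from
a single variable `xₗ`. Its set of variables can only shrink, so it is either still `{xₗ}`, and the
symbol can be recovered from `l`, or empty, and then every term over `Γ` reduces to one fixed term
`ρ`, which may serve as the decoding of the damaged comb. -/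

namespace Tm

variable {α β γ σ : Type} {arα : α → ℕ} {arβ : β → ℕ} {arγ : γ → ℕ} {ar : σ → ℕ}

theorem subst_subst (θ η : ℕ → Tm α arα) (t : Tm α arα) :
    (t.subst θ).subst η = t.subst fun n => (θ n).subst η := by
  induction t with
  | var n => rfl
  | app g ts ih => simp only [subst, ih]

theorem vars_subst (θ : ℕ → Tm α arα) (t : Tm α arα) :
    (t.subst θ).vars = ⋃ n ∈ t.vars, (θ n).vars := by
  induction t with
  | var n => simp only [subst, vars, Set.biUnion_singleton]
  | app g ts ih => simp only [subst, vars, ih, Set.biUnion_iUnion]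

theorem vars_map (ι : σ → γ) (h : ∀ s, arγ (ι s) = ar s) (t : Tm σ ar) :
    (t.map ι h).vars = t.vars := by
  induction t with
  | var n => rfl
  | app s ts ih =>
    simp only [map, vars, ih]
    exact (finCongr (h s)).surjective.iUnion_comp fun i => (ts i).vars

theorem ground_iff_vars_eq_empty (t : Tm α arα) : t.Ground ↔ t.vars = ∅ := by
  induction t with
  | var n => simp only [Ground, vars, Set.singleton_ne_empty]
  | app g ts ih => simp only [Ground, vars, Set.iUnion_eq_empty, ih]

theorem Ground.subst_eq_self {t : Tm α arα} (ht : t.Ground) (θ : ℕ → Tm α arα) :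
    t.subst θ = t := by
  induction t with
  | var n => exact ht.elim
  | app g ts ih => simp only [subst, ih _ (ht _)]

theorem ground_subst {θ : ℕ → Tm α arα} (hθ : ∀ n, (θ n).Ground) (t : Tm α arα) :
    (t.subst θ).Ground := by
  induction t with
  | var n => exact hθ n
  | app _ _ ih => exact ih

/-- The term `s(ts)` in an alphabet into which the alphabet of `s` is embedded by `ι`. -/
def appMap (ι : σ → γ) (h : ∀ s, arγ (ι s) = ar s) (s : σ) (ts : Fin (ar s) → Tm γ arγ) :
    Tm γ arγ :=
  app (ι s) fun i => ts (Fin.cast (h s) i)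

/-- `F` commutes with the symbols of `σ`, which is embedded by `ι` into the alphabet of the source
and by `κ` into that of the target. -/
def PreservesSymbols (ι : σ → α) (h : ∀ s, arα (ι s) = ar s) (κ : σ → β)
    (h' : ∀ s, arβ (κ s) = ar s) (F : Tm α arα → Tm β arβ) : Prop :=
  ∀ s ts, F (appMap ι h s ts) = appMap κ h' s fun i => F (ts i)

theorem PreservesSymbols.subst_map {ι : σ → α} {h : ∀ s, arα (ι s) = ar s} {κ : σ → β}
    {h' : ∀ s, arβ (κ s) = ar s} {F : Tm α arα → Tm β arβ} (hF : PreservesSymbols ι h κ h' F)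
    (θ : ℕ → Tm α arα) (t : Tm σ ar) :
    F ((t.map ι h).subst θ) = (t.map κ h').subst fun n => F (θ n) := by
  induction t with
  | var n => rfl
  | app s ts ih =>
    refine (hF s fun i => ((ts i).map ι h).subst θ).trans ?_
    simp only [ih]
    rfl

theorem forall_vars_iff_subst_map {ι : σ → α} {h : ∀ s, arα (ι s) = ar s} {P : Tm α arα → Prop}
    (hP : ∀ s ts, P (appMap ι h s ts) ↔ ∀ i, P (ts i)) (θ : ℕ → Tm α arα) (t : Tm σ ar) :
    P ((t.map ι h).subst θ) ↔ ∀ n ∈ t.vars, P (θ n) := by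
  induction t with
  | var n => simp only [map, subst, vars, Set.mem_singleton_iff, forall_eq]
  | app s ts ih =>
    refine (hP s fun i => ((ts i).map ι h).subst θ).trans ?_
    simp only [ih, vars, Set.mem_iUnion, forall_exists_index]
    exact forall_comm

/-- The tree homomorphism that replaces `g(t₁, …, tₙ)` by the pattern `φ g` with the images of
`t₁, …, tₙ` substituted for `x₁, …, xₙ`; further variables of the pattern are replaced by `d`. -/
def hom (d : Tm β arβ) (φ : α → Tm β arβ) : Tm α arα → Tm β arβ
  | var n => var n
  | app g ts => (φ g).subst fun k => if hk : k < arα g then hom d φ (ts ⟨k, hk⟩) else d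

theorem Ground.hom {t : Tm α arα} (ht : t.Ground) {d : Tm β arβ} (hd : d.Ground)
    (φ : α → Tm β arβ) : (Tm.hom d φ t).Ground := by
  induction t with
  | var n => exact ht.elim
  | app g ts ih =>
    refine ground_subst (fun k => ?_) _
    split_ifs with hk
    · exact ih _ (ht _)
    · exact hd

theorem preservesSymbols_hom {ι : σ → α} (h : ∀ s, arα (ι s) = ar s) {κ : σ → β}
    (h' : ∀ s, arβ (κ s) = ar s) (d : Tm β arβ) {φ : α → Tm β arβ}
    (hφ : ∀ s, φ (ι s) = app (κ s) fun i => var i) :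
    PreservesSymbols ι h κ h' (hom d φ) := by
  intro s ts
  simp only [appMap, hom, hφ, subst]
  congr 1
  funext i
  have hi : (i : ℕ) < arα (ι s) := by
    rw [h, ← h']
    exact i.isLt
  rw [dif_pos hi]
  rfl

end Tm

section Rewriting

open Tm

variable {α β γ σ : Type} {arα : α → ℕ} {arβ : β → ℕ} {arγ : γ → ℕ} {ar : σ → ℕ}

theorem Step.subst {S : Set (Tm α arα × Tm α arα)} (η : ℕ → Tm α arα) {t t' : Tm α arα}
    (hs : Step S t t') : Step S (t.subst η) (t'.subst η) := by
  induction hs with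
  | rule θ hlr =>
    rw [subst_subst, subst_subst]
    exact .rule _ hlr
  | @congr g ts t' i _ ih =>
    have hupdate : (fun j => (Function.update ts i t' j).subst η) =
        Function.update (fun j => (ts j).subst η) i (t'.subst η) :=
      funext fun j => Function.apply_update (fun _ t => t.subst η) ts i t' j
    simp only [Tm.subst, hupdate]
    exact .congr i ih

theorem Steps.subst {S : Set (Tm α arα × Tm α arα)} (η : ℕ → Tm α arα) {t t' : Tm α arα}
    (hs : Steps S t t') : Steps S (t.subst η) (t'.subst η) :=
  hs.lift (Tm.subst η) fun _ _ => Step.subst η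

theorem Steps.update {S : Set (Tm α arα × Tm α arα)} {g : α} (ts : Fin (arα g) → Tm α arα)
    (i : Fin (arα g)) {t t' : Tm α arα} (hs : Steps S t t') :
    Steps S (app g (Function.update ts i t)) (app g (Function.update ts i t')) := by
  refine hs.lift (fun t => app g (Function.update ts i t)) fun t t' hs => ?_
  have := Step.congr (ts := Function.update ts i t) i (by rwa [Function.update_self])
  rwa [Function.update_idem] at this

theorem Steps.app {S : Set (Tm α arα × Tm α arα)} {g : α} {ts ts' : Fin (arα g) → Tm α arα}
    (hs : ∀ i, Steps S (ts i) (ts' i)) : Steps S (Tm.app g ts) (Tm.app g ts') := by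
  have hpiecewise (I : Finset (Fin (arα g))) :
      Steps S (Tm.app g ts) (Tm.app g (I.piecewise ts' ts)) := by
    induction I using Finset.induction_on with
    | empty => rw [Finset.piecewise_empty]; exact .refl
    | insert i I hi ih =>
      have hstep := Steps.update (I.piecewise ts' ts) i (hs i)
      rw [Function.update_eq_self_iff.2 (I.piecewise_eq_of_notMem ts' ts hi).symm] at hstep
      rw [Finset.piecewise_insert]
      exact ih.trans hstep
  simpa only [Finset.piecewise_univ] using hpiecewise Finset.univ

theorem Steps.subst_congr {S : Set (Tm α arα × Tm α arα)} {θ θ' : ℕ → Tm α arα}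
    (hs : ∀ n, Steps S (θ n) (θ' n)) (t : Tm α arα) : Steps S (t.subst θ) (t.subst θ') := by
  induction t with
  | var n => exact hs n
  | app g ts ih => exact .app ih

theorem Steps.vars_subset {S : Set (Tm α arα × Tm α arα)} (hS : ∀ lr ∈ S, lr.2.vars ⊆ lr.1.vars)
    {t t' : Tm α arα} (hs : Steps S t t') : t'.vars ⊆ t.vars := by
  have step_vars_subset {t t' : Tm α arα} (hs : Step S t t') : t'.vars ⊆ t.vars := by
    induction hs with
    | rule θ hlr =>
      rw [vars_subst, vars_subst]
      exact Set.biUnion_subset_biUnion_left (hS _ hlr)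
    | @congr g ts t' i _ ih =>
      refine Set.iUnion_subset <| (Function.forall_update_iff ts
        fun _ (t : Tm α arα) => t.vars ⊆ (Tm.app g ts).vars).2 ⟨?_, fun j _ => ?_⟩
      · exact ih.trans (Set.subset_iUnion (fun j => (ts j).vars) i)
      · exact Set.subset_iUnion (fun j => (ts j).vars) j
  induction hs with
  | refl => exact subset_rfl
  | tail _ hs ih => exact (step_vars_subset hs).trans ih

theorem Steps.ground {S : Set (Tm α arα × Tm α arα)} (hS : ∀ lr ∈ S, lr.2.vars ⊆ lr.1.vars)
    {t t' : Tm α arα} (hs : Steps S t t') (ht : t.Ground) : t'.Ground := by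
  rw [ground_iff_vars_eq_empty] at ht ⊢
  exact Set.subset_eq_empty (hs.vars_subset hS) ht

theorem Steps.of_var {S : Set (Tm α arα × Tm α arα)} {l : ℕ} {r : Tm α arα}
    (hs : Steps S (var l) r) (hr : r.Ground) (t : Tm α arα) : Steps S t r := by
  simpa only [Tm.subst, hr.subst_eq_self] using hs.subst fun _ => t

/-- `ρ` is reachable from every term as soon as some ground term is. -/
def IsSink (S : Set (Tm α arα × Tm α arα)) (ρ : Tm α arα) : Prop :=
  ∀ l r, Steps S (var l) r → r.Ground → ∀ t, Steps S t ρ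

theorem exists_isSink (S : Set (Tm α arα × Tm α arα)) : ∃ ρ, IsSink S ρ := by
  by_cases hS : ∃ l r, Steps S (var l) r ∧ r.Ground
  · obtain ⟨l, r, hs, hr⟩ := hS
    exact ⟨r, fun _ _ _ _ => hs.of_var hr⟩
  · exact ⟨var 0, fun l r hs hr => (hS ⟨l, r, hs, hr⟩).elim⟩

theorem vars_subset_of_mem_mapRules {R : Set (Tm σ ar × Tm σ ar)}
    (hR : ∀ lr ∈ R, lr.2.vars ⊆ lr.1.vars) (ι : σ → γ) (h : ∀ s, arγ (ι s) = ar s) :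
    ∀ lr ∈ mapRules ι h R, lr.2.vars ⊆ lr.1.vars := by
  rintro _ ⟨lr, hlr, rfl⟩
  simpa only [vars_map] using hR lr hlr

section PreservesSymbols

variable {ι : σ → α} {h : ∀ s, arα (ι s) = ar s} {κ : σ → β} {h' : ∀ s, arβ (κ s) = ar s}
  {R : Set (Tm σ ar × Tm σ ar)} {F : Tm α arα → Tm β arβ}

theorem Tm.PreservesSymbols.step_rule (hF : PreservesSymbols ι h κ h' F) {l r : Tm σ ar}
    (hlr : (l, r) ∈ R) (θ : ℕ → Tm α arα) :
    Step (mapRules κ h' R) (F ((l.map ι h).subst θ)) (F ((r.map ι h).subst θ)) := by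
  rw [hF.subst_map, hF.subst_map]
  exact .rule _ ⟨_, hlr, rfl⟩

theorem Tm.PreservesSymbols.steps_update (hF : PreservesSymbols ι h κ h' F) {s : σ}
    (ts : Fin (ar s) → Tm α arα) {i : Fin (ar s)} {t' : Tm α arα}
    (hs : Steps (mapRules κ h' R) (F (ts i)) (F t')) :
    Steps (mapRules κ h' R) (F (appMap ι h s ts))
      (F (appMap ι h s (Function.update ts i t'))) := by
  rw [hF, hF]
  have hargs : ∀ j, Steps (mapRules κ h' R) (F (ts j)) (F (Function.update ts i t' j)) :=
    (Function.forall_update_iff ts fun j t => Steps (mapRules κ h' R) (F (ts j)) (F t)).2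
      ⟨hs, fun _ _ => .refl⟩
  exact .app fun j => hargs _

theorem Steps.hom (d : Tm β arβ) {φ : α → Tm β arβ}
    (hφ : ∀ s, φ (ι s) = Tm.app (κ s) fun i => var i) {t t' : Tm α arα}
    (hs : Steps (mapRules ι h R) t t') :
    Steps (mapRules κ h' R) (Tm.hom d φ t) (Tm.hom d φ t') := by
  have step_hom {t t' : Tm α arα} (hs : Step (mapRules ι h R) t t') :
      Steps (mapRules κ h' R) (Tm.hom d φ t) (Tm.hom d φ t') := by
    induction hs with
    | rule θ hlr =>
      obtain ⟨_, hlr, ⟨⟩⟩ := hlr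
      exact .single ((preservesSymbols_hom h h' d hφ).step_rule hlr θ)
    | @congr g ts t' i _ ih =>
      have hargs : ∀ j, Steps (mapRules κ h' R) (Tm.hom d φ (ts j))
          (Tm.hom d φ (Function.update ts i t' j)) :=
        (Function.forall_update_iff ts fun j (t : Tm α arα) =>
          Steps (mapRules κ h' R) (Tm.hom d φ (ts j)) (Tm.hom d φ t)).2 ⟨ih, fun _ _ => .refl⟩
      refine .subst_congr (fun k => ?_) _
      split_ifs
      · exact hargs _
      · exact .refl
  induction hs with
  | refl => exact .refl
  | tail _ hs ih => exact ih.trans (step_hom hs)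

end PreservesSymbols

end Rewriting

section InverseHom

open Tm

variable {α β Q : Type} {arα : α → ℕ} {arβ : β → ℕ}

namespace BTA

theorem Reach.app_mono {A : BTA β arβ Q} {g : β} {ts ts' : Fin (arβ g) → Tm β arβ} {q : Q}
    (hts : ∀ i q, A.Reach (ts i) q → A.Reach (ts' i) q) (hr : A.Reach (Tm.app g ts) q) :
    A.Reach (Tm.app g ts') q := by
  generalize ht : Tm.app g ts = t at hr
  induction hr with
  | app hqs htrans =>
    cases ht
    exact .app (fun i => hts i _ (hqs i)) htrans
  | eps _ heps ih => exact .eps (ih ht) heps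

theorem Reach.subst_mono {A : BTA β arβ Q} {θ θ' : ℕ → Tm β arβ}
    (hθ : ∀ n q, A.Reach (θ n) q → A.Reach (θ' n) q) (t : Tm β arβ) :
    ∀ q, A.Reach (t.subst θ) q → A.Reach (t.subst θ') q := by
  induction t with
  | var n => exact hθ n
  | app g ts ih => exact fun q => Reach.app_mono ih

/-- The deterministic automaton whose state at a ground term `t` is the set of states that `A`
reaches at the homomorphic image of `t`. The terms `us` only serve to name the sets of states. -/
def comapHom (A : BTA β arβ Q) (d : Tm β arβ) (φ : α → Tm β arβ) : BTA α arα (Set Q) where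
  trans g Ps P := ∃ us : Fin (arα g) → Tm α arα,
    (∀ i, Ps i = {q | A.Reach (hom d φ (us i)) q}) ∧ P = {q | A.Reach (hom d φ (Tm.app g us)) q}
  eps _ _ := False
  final P := ∃ q ∈ P, A.final q

theorem reach_comapHom (A : BTA β arβ Q) (d : Tm β arβ) (φ : α → Tm β arβ) {t : Tm α arα}
    {P : Set Q} : (A.comapHom d φ).Reach t P ↔ t.Ground ∧ P = {q | A.Reach (hom d φ t) q} := by
  constructor
  · intro hr
    induction hr with
    | eps _ heps => exact heps.elim
    | @app g ts Ps P _ htrans ih =>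
      obtain ⟨us, hus, rfl⟩ := htrans
      have hargs : ∀ i, {q | A.Reach (hom d φ (us i)) q} = {q | A.Reach (hom d φ (ts i)) q} :=
        fun i => (hus i).symm.trans (ih i).2
      refine ⟨fun i => (ih i).1, Set.Subset.antisymm ?_ ?_⟩ <;>
        refine Reach.subst_mono (fun k => ?_) _ <;> split_ifs
      exacts [(hargs _).subset, fun _ => id, (hargs _).superset, fun _ => id]
  · rintro ⟨ht, rfl⟩
    induction t with
    | var n => exact ht.elim
    | app g ts ih => exact .app (fun i => ih i (ht i)) ⟨ts, fun _ => rfl, rfl⟩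

end BTA

theorem Recognizable.preimage_hom {L : Set (Tm β arβ)} (hL : Recognizable L) (d : Tm β arβ)
    (φ : α → Tm β arβ) : Recognizable {t : Tm α arα | t.Ground ∧ hom d φ t ∈ L} := by
  obtain ⟨Q, hQ, A, rfl⟩ := hL
  refine ⟨Set Q, inferInstance, A.comapHom d φ, ?_⟩
  ext t
  constructor
  · rintro ⟨P, ⟨q, hq, hfinal⟩, hr⟩
    obtain ⟨ht, rfl⟩ := (A.reach_comapHom d φ).1 hr
    exact ⟨ht, q, hfinal, hq⟩
  · rintro ⟨ht, q, hfinal, hq⟩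
    exact ⟨_, ⟨q, hq, hfinal⟩, (A.reach_comapHom d φ).2 ⟨ht, rfl⟩⟩

end InverseHom

section ExtendedAlphabet

variable {σ : Type} {ar : σ → ℕ}

/-- Terms over `Σ = {f, ♯} ∪ sign(R)`. -/
abbrev ExtTm (ar : σ → ℕ) : Type := Tm (σ ⊕ Bool) (arExt ar)

theorem arExt_inl (ar : σ → ℕ) (s : σ) : arExt ar (Sum.inl s) = ar s :=
  rfl

/-- The rules of `R` over `Σ = {f, ♯} ∪ sign(R)`. -/
abbrev extRules (R : Set (Tm σ ar × Tm σ ar)) : Set (ExtTm ar × ExtTm ar) :=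
  mapRules Sum.inl (arExt_inl ar) R

namespace Tm

/-- The term `f(u, v)`, where `f` is the fresh binary symbol. -/
def pair (u v : ExtTm ar) : ExtTm ar :=
  app (Sum.inr true) (![u, v] : Fin 2 → ExtTm ar)

/-- The fresh constant `♯`. -/
def sharp : ExtTm ar := app (Sum.inr false) (![] : Fin 0 → ExtTm ar)

theorem app_inr_true (ts : Fin (arExt ar (Sum.inr true)) → ExtTm ar) :
    app (Sum.inr true) ts = pair (ts (0 : Fin 2)) (ts (1 : Fin 2)) :=
  congrArg (app (Sum.inr true)) (List.ofFn_inj.1 rfl)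

theorem ground_sharp : (sharp : ExtTm ar).Ground := fun i : Fin 0 => i.elim0

theorem subst_pair (θ : ℕ → ExtTm ar) (u v : ExtTm ar) :
    (pair u v).subst θ = pair (u.subst θ) (v.subst θ) :=
  app_inr_true _

theorem subst_sharp (θ : ℕ → ExtTm ar) : (sharp : ExtTm ar).subst θ = sharp :=
  ground_sharp.subst_eq_self θ

/-- The right comb `f(a₀, f(a₁, … f(aₗ₋₁, ♯)))`. -/
def comb : ℕ → (ℕ → ExtTm ar) → ExtTm ar
  | 0, _ => sharp
  | l + 1, a => pair (a 0) (comb l fun k => a (k + 1))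

theorem subst_comb (θ : ℕ → ExtTm ar) (l : ℕ) (a : ℕ → ExtTm ar) :
    (comb l a).subst θ = comb l fun k => (a k).subst θ := by
  induction l generalizing a with
  | zero => exact subst_sharp θ
  | succ l ih => rw [comb, subst_pair, ih, comb]

end Tm

open Tm

@[elab_as_elim]
theorem Step.ext_induction {R : Set (Tm σ ar × Tm σ ar)} {P : ExtTm ar → ExtTm ar → Prop}
    (rule : ∀ l r θ, (l, r) ∈ R →
      P ((l.map Sum.inl (arExt_inl ar)).subst θ) ((r.map Sum.inl (arExt_inl ar)).subst θ))
    (app : ∀ (s : σ) (ts : Fin (ar s) → ExtTm ar) (i : Fin (ar s)) (t' : ExtTm ar),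
      P (ts i) t' → P (Tm.app (Sum.inl s) ts) (Tm.app (Sum.inl s) (Function.update ts i t')))
    (pair_left : ∀ u u' v, P u u' → P (pair u v) (pair u' v))
    (pair_right : ∀ u v v', Step (extRules R) v v' → P v v' → P (pair u v) (pair u v'))
    {t t' : ExtTm ar} (hs : Step (extRules R) t t') : P t t' := by
  induction hs with
  | rule θ hlr =>
    obtain ⟨⟨l, r⟩, hlr, ⟨⟩⟩ := hlr
    exact rule l r θ hlr
  | @congr f ts t' i hs ih =>
    rcases f with s | (_ | _)
    · exact app s ts i t' ih
    · exact Fin.elim0 i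
    · rw [app_inr_true, app_inr_true]
      change Fin 2 at i
      fin_cases i
      · exact pair_left _ _ _ ih
      · exact pair_right _ _ _ hs ih

end ExtendedAlphabet

section Spine

open Tm

variable {σ γ : Type} {ar : σ → ℕ} {arγ : γ → ℕ} (ι : σ → γ) (h : ∀ s, arγ (ι s) = ar s)

namespace Tm

/-- The spine of a term keeps only the right argument of each `f`, and replaces each remaining
leaf `♯` by the variable whose index is the number of `f` above it. -/
def spine : ExtTm ar → Tm γ arγ
  | var n => var n
  | app (Sum.inl s) ts => app (ι s) fun i => spine (ts (Fin.cast (h s) i))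
  | app (Sum.inr true) ts => (spine (ts (1 : Fin 2))).subst fun n => var (n + 1)
  | app (Sum.inr false) _ => var 0

theorem preservesSymbols_spine :
    PreservesSymbols Sum.inl (arExt_inl ar) ι h (spine ι h : ExtTm ar → Tm γ arγ) :=
  fun _ _ => rfl

theorem spine_pair (u v : ExtTm ar) :
    spine ι h (pair u v) = (spine ι h v).subst fun n => var (n + 1) :=
  rfl

theorem spine_comb (l : ℕ) (a : ℕ → ExtTm ar) : spine ι h (comb l a) = var l := by
  induction l generalizing a with
  | zero => rfl
  | succ l ih => rw [comb, spine_pair, ih, subst]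

/-- Every right argument of `f` has a spine reachable from a variable, as if it had arisen from a
comb by rewriting. -/
def IsCombLike (S : Set (Tm γ arγ × Tm γ arγ)) : ExtTm ar → Prop
  | var _ => True
  | app (Sum.inl _) ts => ∀ i, IsCombLike S (ts i)
  | app (Sum.inr true) ts => IsCombLike S (ts (0 : Fin 2)) ∧ IsCombLike S (ts (1 : Fin 2)) ∧
      ∃ l, Steps S (var l) (spine ι h (ts (1 : Fin 2)))
  | app (Sum.inr false) _ => True

theorem isCombLike_app (S : Set (Tm γ arγ × Tm γ arγ)) (s : σ) (ts : Fin (ar s) → ExtTm ar) :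
    IsCombLike ι h S (appMap Sum.inl (arExt_inl ar) s ts) ↔ ∀ i, IsCombLike ι h S (ts i) :=
  Iff.rfl

theorem isCombLike_pair (S : Set (Tm γ arγ × Tm γ arγ)) (u v : ExtTm ar) :
    IsCombLike ι h S (pair u v) ↔ IsCombLike ι h S u ∧ IsCombLike ι h S v ∧
      ∃ l, Steps S (var l) (spine ι h v) :=
  Iff.rfl

theorem isCombLike_comb (S : Set (Tm γ arγ × Tm γ arγ)) (l : ℕ) {a : ℕ → ExtTm ar}
    (ha : ∀ k, IsCombLike ι h S (a k)) : IsCombLike ι h S (comb l a) := by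
  induction l generalizing a with
  | zero => trivial
  | succ l ih =>
    refine (isCombLike_pair ι h S _ _).2 ⟨ha 0, ih fun k => ha (k + 1), l, ?_⟩
    rw [spine_comb]
    exact .refl

end Tm

variable {ι h} {R : Set (Tm σ ar × Tm σ ar)}

theorem Step.spine {w w' : ExtTm ar} (hs : Step (extRules R) w w') :
    Steps (mapRules ι h R) (Tm.spine ι h w) (Tm.spine ι h w') := by
  refine Step.ext_induction ?rule ?app ?pair_left ?pair_right hs
  case rule => exact fun l r θ hlr => .single ((preservesSymbols_spine ι h).step_rule hlr θ)
  case app => exact fun s ts i t' ih => (preservesSymbols_spine ι h).steps_update ts ih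
  case pair_left => exact fun _ _ _ _ => .refl
  case pair_right => exact fun _ _ _ _ ih => ih.subst _

theorem Step.isCombLike (hR : ∀ lr ∈ R, lr.2.vars ⊆ lr.1.vars) {w w' : ExtTm ar}
    (hs : Step (extRules R) w w') :
    IsCombLike ι h (mapRules ι h R) w → IsCombLike ι h (mapRules ι h R) w' := by
  refine Step.ext_induction ?rule ?app ?pair_left ?pair_right hs
  case rule =>
    intro l r θ hlr
    rw [forall_vars_iff_subst_map (isCombLike_app ι h _),
      forall_vars_iff_subst_map (isCombLike_app ι h _)]
    exact fun hw n hn => hw n (hR _ hlr hn)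
  case app =>
    exact fun s ts i t' ih hw => (Function.forall_update_iff ts
      fun _ t => IsCombLike ι h (mapRules ι h R) t).2 ⟨ih (hw i), fun j _ => hw j⟩
  case pair_left => exact fun u u' v ih ⟨hu, hv⟩ => ⟨ih hu, hv⟩
  case pair_right =>
    exact fun u v v' hs ih ⟨hu, hv, l, hl⟩ => ⟨hu, ih hv, l, hl.trans hs.spine⟩

theorem Step.vars_spine_eq_or_ground (hR : ∀ lr ∈ R, lr.2.vars ⊆ lr.1.vars) {v v' : ExtTm ar}
    (hs : Step (extRules R) v v') {l : ℕ}
    (hl : Steps (mapRules ι h R) (var l) (Tm.spine ι h v)) :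
    (Tm.spine ι h v').vars = (Tm.spine ι h v).vars ∨ (Tm.spine ι h v').Ground := by
  have hS := vars_subset_of_mem_mapRules hR ι h
  have hv : (Tm.spine ι h v).vars ⊆ {l} := hl.vars_subset hS
  have hv' : (Tm.spine ι h v').vars ⊆ (Tm.spine ι h v).vars := hs.spine.vars_subset hS
  rw [ground_iff_vars_eq_empty]
  rcases Set.subset_singleton_iff_eq.1 (hv'.trans hv) with hempty | hsingleton
  · exact .inr hempty
  · exact .inl (hv'.antisymm (hsingleton ▸ hv))

end Spine

section Coding

open Tm

variable {σ γ : Type} {ar : σ → ℕ} {arγ : γ → ℕ} (ι : σ → γ) (h : ∀ s, arγ (ι s) = ar s)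
  (c : γ → ℕ) (ρ : Tm γ arγ)

namespace Tm

/-- The decoding of a comb whose first right argument has a spine with variables `V` and whose
teeth have decodings `a`: its head symbol is `g` if `V = {c g}`, and `ρ` replaces a comb without
head symbol. -/
noncomputable def decodeHead (V : Set ℕ) (a : ℕ → Tm γ arγ) : Tm γ arγ :=
  Function.extend (fun g => {c g}) (fun g => app g fun i => a i) (fun _ => ρ) V

/-- `decode t 0` is the term coded by `t`, and `decode t (k + 1)` the one coded by the `k`-th
tooth of the comb `t`. Symbols of `sign(R)` are kept at every index, so that a rewrite step
acts on all these terms alike. -/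
noncomputable def decode : ExtTm ar → ℕ → Tm γ arγ
  | var n, _ => var n
  | app (Sum.inl s) ts, k => app (ι s) fun i => decode (ts (Fin.cast (h s) i)) k
  | app (Sum.inr true) ts, 0 => decodeHead c ρ (spine ι h (ts (1 : Fin 2))).vars fun
    | 0 => decode (ts (0 : Fin 2)) 0
    | k + 1 => decode (ts (1 : Fin 2)) (k + 1)
  | app (Sum.inr true) ts, 1 => decode (ts (0 : Fin 2)) 0
  | app (Sum.inr true) ts, k + 2 => decode (ts (1 : Fin 2)) (k + 1)
  | app (Sum.inr false) _, _ => ρ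

theorem preservesSymbols_decode (k : ℕ) :
    PreservesSymbols Sum.inl (arExt_inl ar) ι h
      fun t : ExtTm ar => decode ι h c ρ t k :=
  fun _ _ => by cases k <;> rfl

theorem decode_pair_zero (u v : ExtTm ar) :
    decode ι h c ρ (pair u v) 0 =
      decodeHead c ρ (spine ι h v).vars fun k => decode ι h c ρ (pair u v) (k + 1) := by
  refine congrArg (decodeHead c ρ _) (funext fun k => ?_)
  cases k <;> rfl

theorem decode_comb_succ {l k : ℕ} (hk : k < l) (a : ℕ → ExtTm ar) :
    decode ι h c ρ (comb l a) (k + 1) = decode ι h c ρ (a k) 0 := by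
  induction l generalizing a k with
  | zero => exact absurd hk k.not_lt_zero
  | succ l ih =>
    cases k with
    | zero => rfl
    | succ k => exact ih (Nat.lt_of_succ_lt_succ hk) _

variable {ι h c ρ}

theorem decodeHead_singleton (hc : Function.Injective c) (g : γ) (a : ℕ → Tm γ arγ) :
    decodeHead c ρ {c g} a = app g fun i => a i :=
  (Set.singleton_injective.comp hc).extend_apply _ _ g

theorem decodeHead_empty (a : ℕ → Tm γ arγ) : decodeHead c ρ ∅ a = ρ :=
  Function.extend_apply' _ _ _ fun ⟨g, hg⟩ => Set.singleton_ne_empty (c g) hg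

theorem decode_comb_zero (hc : Function.Injective c) {g : γ} (hg : arγ g ≤ c g)
    (a : ℕ → ExtTm ar) :
    decode ι h c ρ (comb (c g + 1) a) 0 = app g fun i => decode ι h c ρ (a i) 0 := by
  rw [comb, decode_pair_zero, spine_comb, ← comb, vars, decodeHead_singleton hc]
  congr 1
  funext i
  exact decode_comb_succ ι h c ρ (by lia) a

end Tm

variable {ι h c ρ}

theorem Steps.decodeHead {S : Set (Tm γ arγ × Tm γ arγ)} (hc : Function.Injective c) (V : Set ℕ)
    {a a' : ℕ → Tm γ arγ} (ha : ∀ k, Steps S (a k) (a' k)) :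
    Steps S (decodeHead c ρ V a) (decodeHead c ρ V a') := by
  by_cases hV : ∃ g, {c g} = V
  · obtain ⟨g, rfl⟩ := hV
    rw [decodeHead_singleton hc, decodeHead_singleton hc]
    exact .app fun i => ha i
  · rw [Tm.decodeHead, Tm.decodeHead, Function.extend_apply' _ _ _ hV,
      Function.extend_apply' _ _ _ hV]
    exact .refl

theorem Steps.decode_pair {S : Set (Tm γ arγ × Tm γ arγ)} (hc : Function.Injective c)
    {u u' v v' : ExtTm ar} (hu : Steps S (decode ι h c ρ u 0) (decode ι h c ρ u' 0))
    (hv : ∀ k, Steps S (decode ι h c ρ v k) (decode ι h c ρ v' k))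
    (hspine : (spine ι h v').vars = (spine ι h v).vars ∨
      (spine ι h v').Ground ∧ ∀ t, Steps S t ρ) :
    ∀ k, Steps S (decode ι h c ρ (pair u v) k) (decode ι h c ρ (pair u' v') k)
  | 0 => by
    rw [decode_pair_zero, decode_pair_zero]
    rcases hspine with heq | ⟨hground, hρ⟩
    · rw [heq]
      refine .decodeHead hc _ fun k => ?_
      cases k with
      | zero => exact hu
      | succ k => exact hv (k + 1)
    · rw [(ground_iff_vars_eq_empty _).1 hground, decodeHead_empty]
      exact hρ _
  | 1 => hu
  | k + 2 => hv (k + 1)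

variable {R : Set (Tm σ ar × Tm σ ar)}

theorem Step.decode (hR : ∀ lr ∈ R, lr.2.vars ⊆ lr.1.vars) (hc : Function.Injective c)
    (hρ : IsSink (mapRules ι h R) ρ) {w w' : ExtTm ar} (hs : Step (extRules R) w w') :
    IsCombLike ι h (mapRules ι h R) w → ∀ k,
      Steps (mapRules ι h R) (decode ι h c ρ w k) (decode ι h c ρ w' k) := by
  refine Step.ext_induction ?rule ?app ?pair_left ?pair_right hs
  case rule =>
    exact fun l r θ hlr _ k => .single ((preservesSymbols_decode ι h c ρ k).step_rule hlr θ)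
  case app =>
    exact fun s ts i t' ih hw k => (preservesSymbols_decode ι h c ρ k).steps_update ts (ih (hw i) k)
  case pair_left =>
    exact fun u u' v ih ⟨hu, _⟩ => .decode_pair hc (ih hu 0) (fun _ => .refl) (.inl rfl)
  case pair_right =>
    rintro u v v' hs ih ⟨-, hv, l, hl⟩
    refine .decode_pair hc .refl (ih hv) ?_
    exact (hs.vars_spine_eq_or_ground hR hl).imp_right
      fun hground => ⟨hground, hρ l _ (hl.trans hs.spine) hground⟩

theorem Steps.decode (hR : ∀ lr ∈ R, lr.2.vars ⊆ lr.1.vars) (hc : Function.Injective c)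
    (hρ : IsSink (mapRules ι h R) ρ) {w w' : ExtTm ar} (hs : Steps (extRules R) w w')
    (hw : IsCombLike ι h (mapRules ι h R) w) (k : ℕ) :
    Steps (mapRules ι h R) (decode ι h c ρ w k) (decode ι h c ρ w' k) := by
  induction hs using Relation.ReflTransGen.head_induction_on with
  | refl => exact .refl
  | head hs _ ih => exact (hs.decode hR hc hρ hw k).trans (ih (hs.isCombLike hR hw))

variable (ι c) in
/-- The pattern that codes a symbol of `Γ`: symbols of `sign(R)` are kept, and any other `g` becomes
a comb with `c g + 1` teeth. -/
noncomputable def codePattern (ar : σ → ℕ) : γ → ExtTm ar :=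
  Function.extend ι (fun s => Tm.app (Sum.inl s) fun i => var i) fun g => comb (c g + 1) var

variable (ι c) in
/-- The code over `Σ` of a term over `Γ`. The teeth of a comb beyond the arity of its symbol
are `♯`. -/
noncomputable def encode : Tm γ arγ → ExtTm ar :=
  hom sharp (codePattern ι c ar)

theorem codePattern_apply (hι : Function.Injective ι) (s : σ) :
    codePattern ι c ar (ι s) = Tm.app (Sum.inl s) fun i => var i :=
  hι.extend_apply _ _ s

theorem preservesSymbols_encode (hι : Function.Injective ι) :
    PreservesSymbols ι h Sum.inl (arExt_inl ar) (encode ι c : Tm γ arγ → ExtTm ar) :=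
  preservesSymbols_hom h _ sharp (codePattern_apply hι)

theorem encode_app_of_not_mem_range {g : γ} (hg : ¬ ∃ s, ι s = g) (ts : Fin (arγ g) → Tm γ arγ) :
    (encode ι c (Tm.app g ts) : ExtTm ar) =
      comb (c g + 1) fun k => if hk : k < arγ g then encode ι c (ts ⟨k, hk⟩) else sharp := by
  rw [encode, hom, codePattern, Function.extend_apply' _ _ _ hg, subst_comb]
  rfl

@[elab_as_elim]
theorem appMap_induction (ι : σ → γ) (h : ∀ s, arγ (ι s) = ar s) {P : Tm γ arγ → Prop}
    (var : ∀ n, P (var n)) (appMap : ∀ s ts, (∀ i, P (ts i)) → P (appMap ι h s ts))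
    (app : ∀ g ts, (¬ ∃ s, ι s = g) → (∀ i, P (ts i)) → P (app g ts)) (t : Tm γ arγ) : P t := by
  induction t with
  | var n => exact var n
  | app g ts ih =>
    by_cases hg : ∃ s, ι s = g
    · obtain ⟨s, rfl⟩ := hg
      exact appMap s (fun i => ts (Fin.cast (h s).symm i)) fun i => ih _
    · exact app g ts hg ih

theorem isCombLike_encode (hι : Function.Injective ι) (S : Set (Tm γ arγ × Tm γ arγ))
    (t : Tm γ arγ) : IsCombLike ι h S (encode ι c t) := by
  induction t using appMap_induction ι h with
  | var _ => trivial
  | appMap s ts ih =>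
    rw [preservesSymbols_encode hι]
    exact ih
  | app g ts hg ih =>
    rw [encode_app_of_not_mem_range hg]
    refine isCombLike_comb ι h S _ fun k => ?_
    split_ifs
    · exact ih _
    · trivial

theorem decode_encode (hι : Function.Injective ι) (hc : Function.Injective c)
    (hle : ∀ g, arγ g ≤ c g) (t : Tm γ arγ) : decode ι h c ρ (encode ι c t) 0 = t := by
  induction t using appMap_induction ι h with
  | var n => rfl
  | appMap s ts ih =>
    rw [preservesSymbols_encode hι]
    refine (preservesSymbols_decode ι h c ρ 0 s _).trans ?_
    simp only [ih]
  | app g ts hg ih =>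
    rw [encode_app_of_not_mem_range hg, decode_comb_zero hc (hle g)]
    simp only [Fin.is_lt, dif_pos, Fin.eta, ih]

theorem steps_encode_iff (hR : ∀ lr ∈ R, lr.2.vars ⊆ lr.1.vars) (hι : Function.Injective ι)
    (hc : Function.Injective c) (hle : ∀ g, arγ g ≤ c g) {t t' : Tm γ arγ} :
    Steps (extRules R) (encode ι c t) (encode ι c t') ↔ Steps (mapRules ι h R) t t' := by
  refine ⟨fun hs => ?_, Steps.hom sharp (codePattern_apply hι)⟩
  obtain ⟨ρ, hρ⟩ := exists_isSink (mapRules ι h R)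
  simpa only [decode_encode hι hc hle] using
    hs.decode hR hc hρ (isCombLike_encode hι _ t) 0

theorem desc_mapRules_eq (hR : ∀ lr ∈ R, lr.2.vars ⊆ lr.1.vars) (hι : Function.Injective ι)
    (hc : Function.Injective c) (hle : ∀ g, arγ g ≤ c g) {L : Set (Tm γ arγ)}
    (hL : ∀ t ∈ L, t.Ground) :
    Desc (mapRules ι h R) L =
      {t | t.Ground ∧ encode ι c t ∈ Desc (extRules R) (encode ι c '' L)} := by
  ext t
  constructor
  · rintro ⟨q, hq, hs⟩
    exact ⟨hs.ground (vars_subset_of_mem_mapRules hR ι h) (hL q hq), _,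
      Set.mem_image_of_mem _ hq, (steps_encode_iff hR hι hc hle).2 hs⟩
  · rintro ⟨-, _, ⟨q, hq, rfl⟩, hs⟩
    exact ⟨q, hq, (steps_encode_iff hR hι hc hle).1 hs⟩

end Coding

theorem exists_injective_ge {γ : Type*} [Countable γ] (a : γ → ℕ) :
    ∃ c : γ → ℕ, Function.Injective c ∧ ∀ g, a g ≤ c g := by
  obtain ⟨e, he⟩ := exists_injective_nat γ
  refine ⟨fun g => Nat.pair (e g) (a g), fun g g' hgg' => he ?_, fun g => Nat.right_le_pair _ _⟩
  exact (Nat.pair_eq_pair.1 hgg').1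

theorem stmt_8_general {σ : Type} {ar : σ → ℕ} [Finite σ] (R : Set (Tm σ ar × Tm σ ar))
    (hR : ∀ lr ∈ R, lr.2.vars ⊆ lr.1.vars) :
    (∀ L : Set (Tm (σ ⊕ Bool) (arExt ar)), L.Finite → (∀ t ∈ L, t.Ground) →
        Recognizable (Desc (mapRules Sum.inl (fun _ => rfl) R) L)) ↔
      PRF R := by
  constructor
  · intro hRec γ arγ _ ι hι h L hL hground
    obtain ⟨c, hc, hle⟩ := exists_injective_ge arγ
    have hcodes : ∀ w ∈ (encode ι c '' L : Set (ExtTm ar)), w.Ground :=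
      Set.forall_mem_image.2 fun t ht => (hground t ht).hom Tm.ground_sharp _
    rw [desc_mapRules_eq hR hι hc hle hground]
    exact (hRec _ (hL.image _) hcodes).preimage_hom _ _
  · intro hPRF
    exact hPRF (σ ⊕ Bool) (arExt ar) inferInstance Sum.inl Sum.inl_injective fun _ => rfl

/-! ### Statement 8: P`Σ`RF ↔ PRF for `Σ = {f, ♯} ∪ sign(R)`. -/

theorem stmt_8 {σ : Type} {ar : σ → ℕ} [Finite σ]
    (R : Set (Tm σ ar × Tm σ ar)) (hR : IsTRS R)
    -- `R` is a TRS over `sign(R)`: every symbol of the alphabet occurs in `R`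
    (hsign : ∀ s : σ, ∃ lr ∈ R, lr.1.symOccurs s ∨ lr.2.symOccurs s) :
    -- `R` preserves `Σ`-recognizability of finite tree languages …
    (∀ L : Set (Tm (σ ⊕ Bool) (arExt ar)), L.Finite → (∀ t ∈ L, t.Ground) →
        Recognizable (Desc (mapRules Sum.inl (fun _ => rfl) R) L)) ↔
      -- … iff `R` preserves recognizability of finite tree languages.
      PRF R :=
  stmt_8_general R hR.2
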